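/- Let n ≥ 2 and let ℍⁿ = {x ∈ ℝⁿ : xₙ > 0} be the upper half-space, so that d_{ℍⁿ}(x) = xₙ. For every c > 0, neither the function φᶜ(x,y) = |x−y|/(c·L(xₙ, yₙ)) nor the function φ̂ᶜ(x,y) = log(1 + |x−y|/(c·L(xₙ, yₙ))) is a metric on ℍⁿ: in each case the triangle inequality fails for some triple of points of ℍⁿ. -/

import Mathlib

/-- The logarithmic mean of two positive reals. -/
noncomputable def logMean (a b : ℝ) : ℝ :=
  if a = b then a else (a - b) / (Real.log a - Real.log b)

/-!
Write `φ(x, y) = |x - y| / M(xₙ, yₙ)`, where `√t = o(M(a, t))` and `√t = o(M(t, a))` as `t → ∞`.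
Take `x` and `y` at height `a`, at horizontal distance `t ‖e‖` from each other, and `z` at height
`t` above `x`. Since `|x - z|` and `|z - y|` are `O(t)`, both `φ(x, z)` and `φ(z, y)` are `o(√t)`,
so even `(1 + φ(x, z)) (1 + φ(z, y))` is `o(t)`, whereas `φ(x, y)` is linear in `t`. This breaks
the triangle inequality for `log (1 + φ)`, and a fortiori for `φ`. The logarithmic mean
`L(a, t) ~ t / log t` satisfies the growth condition.
-/

open Asymptotics Filter

lemma logMean_self (a : ℝ) : logMean a a = a :=
  if_pos rfl

lemma logMean_of_ne {a b : ℝ} (hab : a ≠ b) :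
    logMean a b = (a - b) / (Real.log a - Real.log b) :=
  if_neg hab

lemma logMean_comm (a b : ℝ) : logMean a b = logMean b a := by
  rcases eq_or_ne a b with rfl | hab
  · rfl
  · rw [logMean_of_ne hab, logMean_of_ne hab.symm, ← neg_div_neg_eq, neg_sub, neg_sub]

lemma logMean_pos {a b : ℝ} (ha : 0 < a) (hb : 0 < b) : 0 < logMean a b := by
  wlog hba : b ≤ a generalizing a b
  · rw [logMean_comm]
    exact this hb ha (le_of_not_ge hba)
  rcases hba.eq_or_lt with rfl | hlt
  · rwa [logMean_self]
  · rw [logMean_of_ne hlt.ne']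
    exact div_pos (sub_pos.2 hlt) (sub_pos.2 (Real.log_lt_log hb hlt))

lemma isLittleO_log_sqrt : Real.log =o[atTop] Real.sqrt := by
  simpa only [← Real.sqrt_eq_rpow] using isLittleO_log_rpow_atTop one_half_pos

lemma isLittleO_sqrt_logMean (a : ℝ) : Real.sqrt =o[atTop] logMean a := by
  have hlog : (fun t ↦ Real.log a - Real.log t) =o[atTop] Real.sqrt :=
    (Real.isLittleO_const_log_atTop.trans isLittleO_log_sqrt).sub isLittleO_log_sqrt
  have hinv : (fun t ↦ (√t)⁻¹) =o[atTop] fun t ↦ (Real.log a - Real.log t)⁻¹ := by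
    refine hlog.inv_rev ?_
    filter_upwards [Real.tendsto_log_atTop.eventually_gt_atTop (Real.log a)] with t ht h
    exact absurd h (sub_neg.2 ht).ne
  have hid : (fun t : ℝ ↦ t) =O[atTop] fun t ↦ a - t :=
    ((IsEquivalent.refl (u := fun t : ℝ ↦ t)).sub_isLittleO
      (isLittleO_const_id_atTop a)).symm.isBigO.trans
      (isBigO_of_le _ fun t ↦ (norm_sub_rev t a).le)
  refine (hid.mul_isLittleO hinv).congr' ?_ ?_
  · exact .of_forall fun t ↦ Real.div_sqrt
  · filter_upwards [eventually_gt_atTop a] with t ht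
    rw [logMean_of_ne ht.ne, div_eq_mul_inv]

lemma isLittleO_one_add_div_sqrt {g m : ℝ → ℝ} (hg : g =O[atTop] fun t ↦ t)
    (hm : Real.sqrt =o[atTop] m) : (fun t ↦ 1 + g t / m t) =o[atTop] Real.sqrt := by
  have hone : (fun _ : ℝ ↦ (1 : ℝ)) =o[atTop] Real.sqrt :=
    isLittleO_const_left.2 (.inr (tendsto_norm_atTop_atTop.comp Real.tendsto_sqrt_atTop))
  have hinv : (fun t ↦ (m t)⁻¹) =o[atTop] fun t ↦ (√t)⁻¹ := by
    refine hm.inv_rev ?_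
    filter_upwards [eventually_gt_atTop 0] with t ht h
    exact absurd h (Real.sqrt_pos.2 ht).ne'
  refine hone.add ((hg.mul_isLittleO hinv).congr (fun t ↦ ?_) fun t ↦ ?_)
  · exact (div_eq_mul_inv _ _).symm
  · exact Real.div_sqrt

lemma add_lt_of_one_add_mul_one_add_lt {r s t : ℝ} (hr : 0 ≤ r) (hs : 0 ≤ s)
    (h : (1 + r) * (1 + s) < 1 + t) : r + s < t := by
  nlinarith [mul_nonneg hr hs]

lemma log_one_add_add_log_one_add_lt {r s t : ℝ} (hr : 0 ≤ r) (hs : 0 ≤ s)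
    (h : (1 + r) * (1 + s) < 1 + t) :
    Real.log (1 + r) + Real.log (1 + s) < Real.log (1 + t) := by
  rw [← Real.log_mul (by positivity) (by positivity)]
  exact Real.log_lt_log (by positivity) h

section RelDist

/-- The `M`-relative distance `|x - y| / M (h x) (h y)`, where `h` is a height function. On the
upper half-space with `h x = xₙ` and `M = c * L`, it is the function `φᶜ`. -/
noncomputable def relDist {X : Type*} [Dist X] (M : ℝ → ℝ → ℝ) (h : X → ℝ) (x y : X) : ℝ :=
  dist x y / M (h x) (h y)

lemma relDist_nonneg {X : Type*} [PseudoMetricSpace X] {M : ℝ → ℝ → ℝ} {h : X → ℝ} {x y : X}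
    (hM : 0 ≤ M (h x) (h y)) : 0 ≤ relDist M h x y :=
  div_nonneg dist_nonneg hM

variable {E : Type*} [NormedAddCommGroup E] [NormedSpace ℝ E]

lemma isBigO_dist_add_smul (p q v w : E) :
    (fun t : ℝ ↦ dist (p + t • v) (q + t • w)) =O[atTop] fun t ↦ t := by
  have hconst : (fun _ : ℝ ↦ p - q) =O[atTop] fun t ↦ t := (isLittleO_const_id_atTop _).isBigO
  have hlin : (fun t : ℝ ↦ t • (v - w)) =O[atTop] fun t ↦ t :=
    .of_bound ‖v - w‖ (.of_forall fun t ↦ by rw [norm_smul, mul_comm])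
  refine (hconst.add hlin).norm_left.congr_left fun t ↦ ?_
  rw [dist_eq_norm, smul_sub, add_sub_add_comm]

lemma relDist_add_smul_of_map_eq_zero (M : ℝ → ℝ → ℝ) {f : E →ₗ[ℝ] ℝ} {e : E} (he : f e = 0)
    (x : E) (t : ℝ) : relDist M f x (x + t • e) = |t| * ‖e‖ / M (f x) (f x) := by
  rw [relDist, dist_self_add_right, norm_smul, Real.norm_eq_abs, map_add, map_smul, he,
    smul_zero, add_zero]

lemma eventually_one_add_relDist_mul_lt {M : ℝ → ℝ → ℝ} {a : ℝ} {f : E →ₗ[ℝ] ℝ} {w e : E}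
    (hMa : 0 < M a a) (hleft : Real.sqrt =o[atTop] fun t ↦ M a t)
    (hright : Real.sqrt =o[atTop] fun t ↦ M t a)
    (hw : f w = 1) (he : f e = 0) (he₀ : e ≠ 0) :
    ∀ᶠ t : ℝ in atTop,
      (1 + relDist M f (a • w) (t • w)) * (1 + relDist M f (t • w) (a • w + t • e)) <
        1 + relDist M f (a • w) (a • w + t • e) := by
  have hup : (fun t : ℝ ↦ 1 + relDist M f (a • w) (t • w)) =o[atTop] Real.sqrt := by
    simpa [relDist, hw] using
      isLittleO_one_add_div_sqrt (isBigO_dist_add_smul (a • w) 0 0 w) hleft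
  have hdown : (fun t : ℝ ↦ 1 + relDist M f (t • w) (a • w + t • e)) =o[atTop] Real.sqrt := by
    simpa [relDist, hw, he] using
      isLittleO_one_add_div_sqrt (isBigO_dist_add_smul 0 (a • w) w e) hright
  have hκ : 0 < ‖e‖ / M a a := div_pos (norm_pos_iff.2 he₀) hMa
  filter_upwards [(hup.mul hdown).bound hκ, eventually_ge_atTop 0] with t hbound ht
  calc _ ≤ ‖e‖ / M a a * ‖√t * √t‖ := (Real.le_norm_self _).trans hbound
    _ = relDist M f (a • w) (a • w + t • e) := by
      rw [Real.mul_self_sqrt ht, relDist_add_smul_of_map_eq_zero M he, map_smul, hw, smul_eq_mul,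
        mul_one, Real.norm_eq_abs]
      ring
    _ < _ := lt_one_add _

end RelDist

lemma euclideanSpace_projₗ_ne_zero {ι : Type*} (i : ι) :
    (EuclideanSpace.projₗ i : EuclideanSpace ℝ ι →ₗ[ℝ] ℝ) ≠ 0 := by
  classical
  exact fun h ↦ by simpa using LinearMap.congr_fun h (EuclideanSpace.single i 1)

lemma one_lt_rank_euclideanSpace {n : ℕ} (hn : 2 ≤ n) :
    1 < Module.rank ℝ (EuclideanSpace ℝ (Fin n)) :=
  Module.one_lt_rank_of_one_lt_finrank (by rwa [finrank_euclideanSpace_fin])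

theorem stmt9_general {E : Type*} [NormedAddCommGroup E] [NormedSpace ℝ E]
    (hE : 1 < Module.rank ℝ E) {f : E →ₗ[ℝ] ℝ} (hf : f ≠ 0) {M : ℝ → ℝ → ℝ} {a : ℝ} (ha : 0 < a)
    (hM : ∀ s t, 0 < s → 0 < t → 0 < M s t)
    (hleft : Real.sqrt =o[atTop] fun t ↦ M a t) (hright : Real.sqrt =o[atTop] fun t ↦ M t a) :
    ∃ x ∈ {p | 0 < f p}, ∃ y ∈ {p | 0 < f p}, ∃ z ∈ {p | 0 < f p},
      relDist M f x z + relDist M f z y < relDist M f x y ∧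
      Real.log (1 + relDist M f x z) + Real.log (1 + relDist M f z y) <
        Real.log (1 + relDist M f x y) := by
  obtain ⟨w, hw⟩ : ∃ w, f w = 1 := LinearMap.surjective hf 1
  have hker : LinearMap.ker f ≠ ⊥ := fun h ↦ hE.not_ge <| by
    simpa using f.lift_rank_le_of_injective (LinearMap.ker_eq_bot.1 h)
  obtain ⟨e, he, he₀⟩ := Submodule.exists_mem_ne_zero_of_ne_bot hker
  rw [LinearMap.mem_ker] at he
  obtain ⟨t, hlt, ht⟩ := ((eventually_one_add_relDist_mul_lt (hM a a ha ha) hleft hright hw he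
    he₀).and (eventually_gt_atTop 0)).exists
  have hx : 0 < f (a • w) := by simpa [hw] using ha
  have hy : 0 < f (a • w + t • e) := by simpa [hw, he] using ha
  have hz : 0 < f (t • w) := by simpa [hw] using ht
  have hxz := relDist_nonneg (hM _ _ hx hz).le
  have hzy := relDist_nonneg (hM _ _ hz hy).le
  exact ⟨_, hx, _, hy, _, hz, add_lt_of_one_add_mul_one_add_lt hxz hzy hlt,
    log_one_add_add_log_one_add_lt hxz hzy hlt⟩

theorem stmt9 (n : ℕ) (hn : 2 ≤ n) (c : ℝ) (hc : 0 < c) :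
    (∃ x ∈ {p : EuclideanSpace ℝ (Fin n) | 0 < p ⟨n - 1, by omega⟩},
      ∃ y ∈ {p : EuclideanSpace ℝ (Fin n) | 0 < p ⟨n - 1, by omega⟩},
      ∃ z ∈ {p : EuclideanSpace ℝ (Fin n) | 0 < p ⟨n - 1, by omega⟩},
        dist x z / (c * logMean (x ⟨n - 1, by omega⟩) (z ⟨n - 1, by omega⟩)) +
          dist z y / (c * logMean (z ⟨n - 1, by omega⟩) (y ⟨n - 1, by omega⟩)) <
          dist x y / (c * logMean (x ⟨n - 1, by omega⟩) (y ⟨n - 1, by omega⟩))) ∧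
    (∃ x ∈ {p : EuclideanSpace ℝ (Fin n) | 0 < p ⟨n - 1, by omega⟩},
      ∃ y ∈ {p : EuclideanSpace ℝ (Fin n) | 0 < p ⟨n - 1, by omega⟩},
      ∃ z ∈ {p : EuclideanSpace ℝ (Fin n) | 0 < p ⟨n - 1, by omega⟩},
        Real.log (1 + dist x z /
            (c * logMean (x ⟨n - 1, by omega⟩) (z ⟨n - 1, by omega⟩))) +
          Real.log (1 + dist z y /
            (c * logMean (z ⟨n - 1, by omega⟩) (y ⟨n - 1, by omega⟩))) <
          Real.log (1 + dist x y /
            (c * logMean (x ⟨n - 1, by omega⟩) (y ⟨n - 1, by omega⟩)))) := by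
  obtain ⟨x, hx, y, hy, z, hz, h, hlog⟩ := stmt9_general (one_lt_rank_euclideanSpace hn)
    (euclideanSpace_projₗ_ne_zero ⟨n - 1, by omega⟩) (M := fun s t ↦ c * logMean s t) one_pos
    (fun s t hs ht ↦ mul_pos hc (logMean_pos hs ht))
    ((isLittleO_sqrt_logMean 1).const_mul_right hc.ne')
    (by simpa only [logMean_comm _ 1] using (isLittleO_sqrt_logMean 1).const_mul_right hc.ne')
  exact ⟨⟨x, hx, y, hy, z, hz, h⟩, x, hx, y, hy, z, hz, hlog⟩
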